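/- There is a constant C > 0, depending only on α, such that for all t with 0 < t ≤ 1/2 one has |K_0^α(t,1)| ≤ C, and for every integer n ≠ 0 and all 0 < t ≤ 1/2 one has |K_n^α(t,1)| ≤ C · t^{|n|−1}. -/

import Mathlib

open Real

/-- Parametrization of the infinite straight cone of opening angle `2α`. -/
noncomputable def coneParam (α t θ : ℝ) : EuclideanSpace ℝ (Fin 3) :=
  !₂[sin α * t * cos θ, sin α * t * sin θ, cos α * t]

/-- Outward unit normal of the cone. -/
noncomputable def coneNormal (α θ : ℝ) : EuclideanSpace ℝ (Fin 3) :=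
  !₂[cos α * cos θ, cos α * sin θ, -sin α]

/-- The layer-potential kernel of the infinite straight cone. -/
noncomputable def coneKernel (α t θ t' θ' : ℝ) : ℝ :=
  (inner ℝ (coneParam α t θ - coneParam α t' θ') (coneNormal α θ) : ℝ) /
    ‖coneParam α t' θ' - coneParam α t θ‖ ^ 3

/-- The `n`-th modal kernel `K_n^α(t,t') = (1/(2π)) ∫₀^{2π} e^{−inθ} K^{Γ_α}(t,θ,t',0) dθ`. -/
noncomputable def modalKernel (α : ℝ) (n : ℤ) (t t' : ℝ) : ℂ :=
  ((1 / (2 * π) : ℝ) : ℂ) *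
    ∫ θ in (0:ℝ)..(2 * π), Complex.exp (-Complex.I * (n : ℂ) * (θ : ℂ)) * (coneKernel α t θ t' 0 : ℂ)

/-!
The squared distance between the points of the cone at distances `t`, `t'` from the apex and angles
`θ`, `0` extends to an entire function of `θ`, and its real part at `θ + i y` stays at least
`cos² α (t - t')²` as long as `2 t t' cosh y ≤ t² + t'²`. The kernel therefore extends
holomorphically to a strip, and shifting the contour of the Fourier integral to height `y` gains the
factor `exp (n y)`. The extreme admissible heights are exactly `y = ± log (t / t')`, which yields
`(t / t') ^ |n|`; the loss of one power of `t` comes from the growth `cosh y ~ t' / (2 t)` of the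
numerator. For `cos α = 0` the cone is a plane and the kernel vanishes.
-/

section FourierContourShift

theorem norm_cos_le_cosh_im (z : ℂ) : ‖Complex.cos z‖ ≤ cosh z.im := by
  have norm_exp_sum : ‖Complex.exp (z * Complex.I) + Complex.exp (-z * Complex.I)‖ ≤
      exp (-z.im) + exp z.im := by
    simpa [Complex.norm_exp] using
      norm_add_le (Complex.exp (z * Complex.I)) (Complex.exp (-z * Complex.I))
  rw [Complex.cos, norm_div, Complex.norm_ofNat, cosh_eq, add_comm (exp z.im)]
  gcongr

theorem integral_eq_integral_add_mul_I_of_periodic {f : ℂ → ℂ} {T y : ℝ}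
    (hf : Function.Periodic f T)
    (hdiff : DifferentiableOn ℂ f (Set.uIcc 0 T ×ℂ Set.uIcc 0 y)) :
    ∫ x in (0 : ℝ)..T, f x = ∫ x in (0 : ℝ)..T, f (x + y * Complex.I) := by
  have boundary_eq_zero := Complex.integral_boundary_rect_eq_zero_of_differentiableOn f 0
    (T + y * Complex.I) (by simpa using hdiff)
  have sides_cancel (s : ℝ) : f (T + s * Complex.I) = f (s * Complex.I) := by
    rw [add_comm, hf]
  simpa [sides_cancel, sub_eq_zero] using boundary_eq_zero

theorem periodic_exp_neg_I_mul_int (n : ℤ) :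
    Function.Periodic (fun z : ℂ ↦ Complex.exp (-Complex.I * n * z)) (2 * π : ℝ) := fun z ↦ by
  rw [Complex.exp_eq_exp_iff_exists_int]
  exact ⟨-n, by push_cast; ring⟩

theorem norm_integral_exp_mul_le_of_periodic {g : ℂ → ℂ} {y M : ℝ} (n : ℤ)
    (hg : Function.Periodic g (2 * π : ℝ))
    (hdiff : DifferentiableOn ℂ g (Set.uIcc 0 (2 * π) ×ℂ Set.uIcc 0 y))
    (hM : ∀ x : ℝ, ‖g (x + y * Complex.I)‖ ≤ M) :
    ‖∫ θ in (0 : ℝ)..(2 * π), Complex.exp (-Complex.I * n * θ) * g θ‖ ≤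
      exp (n * y) * M * (2 * π) := by
  have shift := integral_eq_integral_add_mul_I_of_periodic
    ((periodic_exp_neg_I_mul_int n).mul hg) (y := y) (DifferentiableOn.mul (by fun_prop) hdiff)
  have norm_integrand_le (x : ℝ) :
      ‖Complex.exp (-Complex.I * n * (x + y * Complex.I)) * g (x + y * Complex.I)‖ ≤
        exp (n * y) * M := by
    have re_exponent : (-Complex.I * n * (x + y * Complex.I)).re = n * y := by simp
    rw [norm_mul, Complex.norm_exp, re_exponent]
    gcongr
    exact hM x
  have integral_le := intervalIntegral.norm_integral_le_of_norm_le_const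
    (a := 0) (b := 2 * π) fun x _ ↦ norm_integrand_le x
  rw [sub_zero, abs_of_pos two_pi_pos] at integral_le
  exact (congrArg norm shift).trans_le integral_le

end FourierContourShift

section ConeGeometry

variable (α t t' θ θ' : ℝ)

theorem inner_coneParam_sub_coneNormal :
    inner ℝ (coneParam α t θ - coneParam α t' θ') (coneNormal α θ) =
      sin α * cos α * t' * (1 - cos (θ - θ')) := by
  simp only [coneParam, coneNormal, PiLp.inner_apply, Fin.sum_univ_three, PiLp.sub_apply,
    Matrix.cons_val, RCLike.inner_apply, conj_trivial, cos_sub]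
  linear_combination sin α * cos α * t * sin_sq_add_cos_sq θ

theorem norm_coneParam_sub_sq :
    ‖coneParam α t' θ' - coneParam α t θ‖ ^ 2 =
      t ^ 2 + t' ^ 2 - 2 * t * t' * (cos α ^ 2 + sin α ^ 2 * cos (θ - θ')) := by
  simp only [coneParam, EuclideanSpace.norm_sq_eq, Fin.sum_univ_three, PiLp.sub_apply,
    Matrix.cons_val, norm_eq_abs, sq_abs, cos_sub]
  linear_combination (t ^ 2 + t' ^ 2) * sin_sq_add_cos_sq α +
    sin α ^ 2 * t ^ 2 * sin_sq_add_cos_sq θ + sin α ^ 2 * t' ^ 2 * sin_sq_add_cos_sq θ'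

end ConeGeometry

/-- The squared distance between the points of the cone at distances `t`, `t'` from the apex and
angular separation `z`, extended to complex `z`. -/
noncomputable def coneDistSq (α t t' : ℝ) (z : ℂ) : ℂ :=
  t ^ 2 + t' ^ 2 - 2 * t * t' * (cos α ^ 2 + sin α ^ 2 * Complex.cos z)

/-- The extension of `θ ↦ coneKernel α t θ t' 0` to complex angles. The cube of the distance is
taken as the cube of the principal square root of `coneDistSq`, so this is holomorphic only where
`coneDistSq` avoids the branch cut. -/
noncomputable def coneKernelExt (α t t' : ℝ) (z : ℂ) : ℂ :=
  sin α * cos α * t' * (1 - Complex.cos z) / (coneDistSq α t t' z ^ (2⁻¹ : ℂ)) ^ 3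

section KernelExtension

variable {α t t' : ℝ} {z : ℂ}

theorem coneKernelExt_ofReal (α t t' θ : ℝ) :
    coneKernelExt α t t' θ = coneKernel α t θ t' 0 := by
  set d := ‖coneParam α t' 0 - coneParam α t θ‖ with hd
  have distSq_eq : coneDistSq α t t' θ = ((d ^ 2 : ℝ) : ℂ) := by
    rw [hd, norm_coneParam_sub_sq, coneDistSq]
    push_cast
    rw [sub_zero]
  have sqrt_distSq : ((d ^ 2 : ℝ) : ℂ) ^ (2⁻¹ : ℂ) = d := by
    have rpow_eq : (d ^ 2) ^ (2⁻¹ : ℝ) = d := pow_rpow_inv_natCast (norm_nonneg _) two_ne_zero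
    conv_rhs => rw [← rpow_eq]
    rw [Complex.ofReal_cpow (sq_nonneg d)]
    norm_num
  rw [coneKernelExt, distSq_eq, sqrt_distSq, coneKernel, inner_coneParam_sub_coneNormal, ← hd]
  push_cast
  rw [sub_zero]

theorem periodic_coneKernelExt (α t t' : ℝ) :
    Function.Periodic (coneKernelExt α t t') (2 * π : ℝ) := fun z ↦ by
  simp only [coneKernelExt, coneDistSq, Complex.ofReal_mul, Complex.ofReal_ofNat,
    Complex.cos_add_two_pi]

theorem differentiableAt_coneKernelExt (hz : 0 < (coneDistSq α t t' z).re) :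
    DifferentiableAt ℂ (coneKernelExt α t t') z := by
  have mem_slitPlane : coneDistSq α t t' z ∈ Complex.slitPlane := Or.inl hz
  have sqrt_ne_zero : coneDistSq α t t' z ^ (2⁻¹ : ℂ) ≠ 0 :=
    Complex.cpow_ne_zero_iff.2 <| Or.inl <| Complex.slitPlane_ne_zero mem_slitPlane
  have distSq_diff : DifferentiableAt ℂ (coneDistSq α t t') z := by
    unfold coneDistSq
    fun_prop
  exact DifferentiableAt.div (by fun_prop) ((distSq_diff.cpow_const mem_slitPlane).pow 3)
    (pow_ne_zero 3 sqrt_ne_zero)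

theorem le_re_coneDistSq (ht : 0 ≤ t) (ht' : 0 ≤ t')
    (hz : 2 * t * t' * cosh z.im ≤ t ^ 2 + t' ^ 2) :
    (cos α * (t' - t)) ^ 2 ≤ (coneDistSq α t t' z).re := by
  have re_cos_le : (Complex.cos z).re ≤ cosh z.im :=
    (Complex.re_le_norm _).trans (norm_cos_le_cosh_im z)
  have re_eq : (coneDistSq α t t' z).re =
      t ^ 2 + t' ^ 2 - 2 * t * t' * (cos α ^ 2 + sin α ^ 2 * (Complex.cos z).re) := by
    have : coneDistSq α t t' z = ((t ^ 2 + t' ^ 2 - 2 * t * t' * cos α ^ 2 : ℝ) : ℂ) -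
        ((2 * t * t' * sin α ^ 2 : ℝ) : ℂ) * Complex.cos z := by
      rw [coneDistSq]
      push_cast
      ring
    rw [this, Complex.sub_re, Complex.ofReal_re, Complex.re_ofReal_mul]
    ring
  have gap_nonneg : 0 ≤ t ^ 2 + t' ^ 2 - 2 * t * t' * (Complex.cos z).re :=
    sub_nonneg.2 <| hz.trans' (by gcongr)
  calc (cos α * (t' - t)) ^ 2
    _ ≤ (cos α * (t' - t)) ^ 2 +
        sin α ^ 2 * (t ^ 2 + t' ^ 2 - 2 * t * t' * (Complex.cos z).re) :=
      le_add_of_nonneg_right (mul_nonneg (sq_nonneg _) gap_nonneg)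
    _ = (coneDistSq α t t' z).re := by
      rw [re_eq]
      linear_combination (t ^ 2 + t' ^ 2) * sin_sq_add_cos_sq α

theorem norm_coneKernelExt_le (hα : cos α ≠ 0) (ht : 0 ≤ t) (ht' : 0 ≤ t') (hne : t ≠ t')
    (hz : 2 * t * t' * cosh z.im ≤ t ^ 2 + t' ^ 2) :
    ‖coneKernelExt α t t' z‖ ≤
      |sin α * cos α| * t' * (1 + cosh z.im) / |cos α * (t' - t)| ^ 3 := by
  have dist_pos : 0 < |cos α * (t' - t)| := abs_pos.2 (mul_ne_zero hα (sub_ne_zero.2 hne.symm))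
  have dist_le_norm_sqrt : |cos α * (t' - t)| ≤ ‖coneDistSq α t t' z ^ (2⁻¹ : ℂ)‖ := by
    refine abs_le_of_sq_le_sq ?_ (norm_nonneg _)
    have sqrt_sq : (coneDistSq α t t' z ^ (2⁻¹ : ℂ)) ^ 2 = coneDistSq α t t' z :=
      Complex.cpow_nat_inv_pow _ two_ne_zero
    rw [← norm_pow, sqrt_sq]
    exact (le_re_coneDistSq ht ht' hz).trans (Complex.re_le_norm _)
  have norm_one_sub_cos_le : ‖1 - Complex.cos z‖ ≤ 1 + cosh z.im :=
    (norm_sub_le _ _).trans (by simpa using norm_cos_le_cosh_im z)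
  have norm_coeff : ‖(sin α * cos α * t' : ℂ)‖ = |sin α * cos α| * t' := by
    rw [← Complex.ofReal_mul, norm_mul, Complex.norm_real, Complex.norm_of_nonneg ht', norm_eq_abs]
  rw [coneKernelExt, norm_div, norm_mul, norm_pow, norm_coeff]
  exact div_le_div₀ (by positivity) (by gcongr) (pow_pos dist_pos 3) (by gcongr)

end KernelExtension

section ModalKernelBounds

variable {α t t' : ℝ}

theorem modalKernel_eq_zero_of_cos_eq_zero (hα : cos α = 0) (n : ℤ) (t t' : ℝ) :
    modalKernel α n t t' = 0 := by
  simp [modalKernel, coneKernel, inner_coneParam_sub_coneNormal, hα]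

theorem norm_modalKernel_le_exp_mul (hα : cos α ≠ 0) (ht : 0 ≤ t) (ht' : 0 ≤ t') (hne : t ≠ t')
    (n : ℤ) {y : ℝ} (hy : 2 * t * t' * cosh y ≤ t ^ 2 + t' ^ 2) :
    ‖modalKernel α n t t'‖ ≤
      exp (n * y) * (|sin α * cos α| * t' * (1 + cosh y) / |cos α * (t' - t)| ^ 3) := by
  have differentiableOn_strip :
      DifferentiableOn ℂ (coneKernelExt α t t') (Set.uIcc 0 (2 * π) ×ℂ Set.uIcc 0 y) := by
    intro z hz
    have abs_im_le : |z.im| ≤ |y| := by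
      simpa using Set.abs_sub_left_of_mem_uIcc (Complex.mem_reProdIm.1 hz).2
    have cosh_im_le : 2 * t * t' * cosh z.im ≤ t ^ 2 + t' ^ 2 :=
      hy.trans' (by gcongr; exact cosh_le_cosh.2 abs_im_le)
    have dist_pos : 0 < (cos α * (t' - t)) ^ 2 :=
      sq_pos_of_ne_zero (mul_ne_zero hα (sub_ne_zero.2 hne.symm))
    exact (differentiableAt_coneKernelExt
      (dist_pos.trans_le (le_re_coneDistSq ht ht' cosh_im_le))).differentiableWithinAt
  have norm_shifted_le (x : ℝ) : ‖coneKernelExt α t t' (x + y * Complex.I)‖ ≤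
      |sin α * cos α| * t' * (1 + cosh y) / |cos α * (t' - t)| ^ 3 := by
    have im_eq : (x + y * Complex.I).im = y := by simp
    simpa only [im_eq] using
      norm_coneKernelExt_le (z := x + y * Complex.I) hα ht ht' hne (by rwa [im_eq])
  have integral_le := norm_integral_exp_mul_le_of_periodic n (periodic_coneKernelExt α t t')
    differentiableOn_strip norm_shifted_le
  simp only [coneKernelExt_ofReal] at integral_le
  rw [modalKernel, norm_mul, Complex.norm_of_nonneg (by positivity), one_div_mul_eq_div,
    div_le_iff₀ two_pi_pos]
  exact integral_le

theorem norm_modalKernel_le (hα : cos α ≠ 0) (ht : 0 ≤ t) (ht' : 0 ≤ t') (hne : t ≠ t') (n : ℤ) :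
    ‖modalKernel α n t t'‖ ≤ |sin α * cos α| * t' * 2 / |cos α * (t' - t)| ^ 3 := by
  have unshifted := norm_modalKernel_le_exp_mul (y := 0) hα ht ht' hne n
    (by simpa using two_mul_le_add_sq t t')
  simpa [one_add_one_eq_two] using unshifted

theorem norm_modalKernel_le_pow_natAbs (hα : cos α ≠ 0) (ht : 0 < t) (ht' : 0 < t') (hne : t ≠ t')
    (n : ℤ) :
    ‖modalKernel α n t t'‖ ≤ (t / t') ^ n.natAbs *
      (|sin α * cos α| * ((t + t') ^ 2 / (2 * t)) / |cos α * (t' - t)| ^ 3) := by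
  have ratio_pos : 0 < t / t' := div_pos ht ht'
  obtain ⟨y, cosh_y, exp_y⟩ : ∃ y, cosh y = cosh (log (t / t')) ∧
      exp (n * y) = (t / t') ^ n.natAbs := by
    have exp_log_ratio : exp (n.natAbs * log (t / t')) = (t / t') ^ n.natAbs := by
      rw [exp_nat_mul, exp_log ratio_pos]
    rcases Int.natAbs_eq n with hn | hn
    · exact ⟨log (t / t'), rfl, by rw [← exp_log_ratio, hn]; simp⟩
    · exact ⟨-log (t / t'), cosh_neg _, by rw [← exp_log_ratio, hn]; simp⟩
  rw [cosh_log ratio_pos] at cosh_y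
  have extremal : 2 * t * t' * cosh y = t ^ 2 + t' ^ 2 := by
    rw [cosh_y]
    field_simp
  have numerator : t' * (1 + cosh y) = (t + t') ^ 2 / (2 * t) := by
    rw [cosh_y]
    field_simp
    ring
  have shifted := norm_modalKernel_le_exp_mul hα ht.le ht'.le hne n extremal.le
  rwa [exp_y, mul_assoc |sin α * cos α|, numerator] at shifted

end ModalKernelBounds

section DecayAtZero

variable {α τ t : ℝ}

theorem abs_sin_mul_cos_mul_div_le {a b : ℝ} (hα : cos α ≠ 0) (hb : 0 ≤ b) (hab : a ≤ b)
    (hτ : τ < 1) (htτ : t ≤ τ) :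
    |sin α * cos α| * a / |cos α * (1 - t)| ^ 3 ≤ b / |cos α * (1 - τ)| ^ 3 := by
  have coeff_le_one : |sin α * cos α| ≤ 1 := by
    rw [abs_mul]
    exact mul_le_one₀ (abs_sin_le_one α) (abs_nonneg _) (abs_cos_le_one α)
  have dist_pos : 0 < |cos α * (1 - τ)| := abs_pos.2 (mul_ne_zero hα (sub_pos.2 hτ).ne')
  have dist_le : |cos α * (1 - τ)| ≤ |cos α * (1 - t)| := by
    rw [abs_mul, abs_mul]
    gcongr
  have numerator_le : |sin α * cos α| * a ≤ b :=
    (mul_le_mul_of_nonneg_left hab (abs_nonneg _)).trans (mul_le_of_le_one_left hb coeff_le_one)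
  exact div_le_div₀ hb numerator_le (pow_pos dist_pos 3) (by gcongr)

theorem norm_modalKernel_one_le (hα : cos α ≠ 0) (hτ : τ < 1) (ht : 0 < t) (htτ : t ≤ τ) (n : ℤ) :
    ‖modalKernel α n t 1‖ ≤ 2 / |cos α * (1 - τ)| ^ 3 := by
  have bound := norm_modalKernel_le hα ht.le zero_le_one (htτ.trans_lt hτ).ne n
  rw [mul_one] at bound
  exact bound.trans (abs_sin_mul_cos_mul_div_le hα zero_le_two le_rfl hτ htτ)

theorem norm_modalKernel_one_le_pow (hα : cos α ≠ 0) (hτ : τ < 1) (ht : 0 < t) (htτ : t ≤ τ)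
    {n : ℤ} (hn : n ≠ 0) :
    ‖modalKernel α n t 1‖ ≤ 2 / |cos α * (1 - τ)| ^ 3 * t ^ (n.natAbs - 1) := by
  have bound := norm_modalKernel_le_pow_natAbs hα ht one_pos (htτ.trans_lt hτ).ne n
  rw [div_one] at bound
  calc ‖modalKernel α n t 1‖
    _ ≤ t ^ n.natAbs * (|sin α * cos α| * ((t + 1) ^ 2 / (2 * t)) / |cos α * (1 - t)| ^ 3) := bound
    _ = |sin α * cos α| * ((t + 1) ^ 2 / 2) / |cos α * (1 - t)| ^ 3 * t ^ (n.natAbs - 1) := by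
      rw [← pow_sub_one_mul (Int.natAbs_ne_zero.2 hn) t]
      field_simp
    _ ≤ 2 / |cos α * (1 - τ)| ^ 3 * t ^ (n.natAbs - 1) := by
      have numerator_le : (t + 1) ^ 2 / 2 ≤ 2 := by nlinarith
      exact mul_le_mul_of_nonneg_right
        (abs_sin_mul_cos_mul_div_le hα zero_le_two numerator_le hτ htτ) (by positivity)

end DecayAtZero

theorem modalKernel_decay_zero_general (α : ℝ) {τ : ℝ} (hτ : τ < 1) :
    ∃ C : ℝ, 0 < C ∧
      (∀ t : ℝ, 0 < t → t ≤ τ → ‖modalKernel α 0 t 1‖ ≤ C) ∧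
      (∀ n : ℤ, n ≠ 0 → ∀ t : ℝ, 0 < t → t ≤ τ →
        ‖modalKernel α n t 1‖ ≤ C * t ^ (n.natAbs - 1)) := by
  by_cases hα : cos α = 0
  · simp only [modalKernel_eq_zero_of_cos_eq_zero hα, norm_zero]
    exact ⟨1, one_pos, fun _ _ _ ↦ zero_le_one, fun _ _ _ _ _ ↦ by positivity⟩
  · have dist_pos : 0 < |cos α * (1 - τ)| := abs_pos.2 (mul_ne_zero hα (sub_pos.2 hτ).ne')
    exact ⟨2 / |cos α * (1 - τ)| ^ 3, div_pos two_pos (pow_pos dist_pos 3),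
      fun t ht htτ ↦ norm_modalKernel_one_le hα hτ ht htτ 0,
      fun n hn t ht htτ ↦ norm_modalKernel_one_le_pow hα hτ ht htτ hn⟩

/-- Behaviour of the modal kernel near the origin: there is `C > 0`, depending only
on `α`, with `|K_0^α(t,1)| ≤ C` for `0 < t ≤ 1/2`, and `|K_n^α(t,1)| ≤ C t^{|n|−1}`
for `0 < t ≤ 1/2` and `n ≠ 0`. -/
theorem modalKernel_decay_zero (α : ℝ) (hα0 : 0 < α) (hαπ : α < π) (hα2 : α ≠ π / 2) :
    ∃ C : ℝ, 0 < C ∧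
      (∀ t : ℝ, 0 < t → t ≤ 1 / 2 → ‖modalKernel α 0 t 1‖ ≤ C) ∧
      (∀ n : ℤ, n ≠ 0 → ∀ t : ℝ, 0 < t → t ≤ 1 / 2 →
        ‖modalKernel α n t 1‖ ≤ C * t ^ (n.natAbs - 1)) := by
  exact modalKernel_decay_zero_general α one_half_lt_one
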